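/- Let Σ be a symmetric real matrix indexed by a countable set I, and let X = (X_i) be a mean-zero Gaussian family with covariance Σ. Define Wick products He_α(X; Σ) = Σ_{M ∈ M(α)} (-1)^{|M|} ∏_{uv ∈ M} Σ[u,v] ∏_{u ∉ M} X_u, summing over partial matchings M of the multiset α. Then for finitely supported multi-indices α, β with |α| ≠ |β| (different total degrees), E[He_α(X; Σ) · He_β(X; Σ)] = 0; and in general E[He_α(X;Σ) He_β(X;Σ)] = Σ_{M ∈ M_perf(α,β)} ∏_{uv ∈ M} Σ[u,v], where M_perf(α,β) ranges over perfect matchings pairing elements of α only with elements of β. -/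

import Mathlib

open MeasureTheory ProbabilityTheory

/-- The Wick product `He_a(X; S)` associated with the finite multiset of indices
listed by `a : Fin m → I`:
`He_a = Σ_{M partial matchings of the multiset} (-1)^{|M|} ∏_{uv ∈ M} S[u,v] ∏_{u ∉ M} X_u`.
Partial matchings of `Fin m` are encoded as involutions `f : Fin m → Fin m`,
the matched pairs being the 2-cycles of `f` and the unmatched elements its fixed
points. -/
noncomputable def wickProduct {Ω I : Type*} (X : I → Ω → ℝ) (S : I → I → ℝ)
    {m : ℕ} (a : Fin m → I) (ω : Ω) : ℝ :=
  ∑ f ∈ Finset.univ.filter (fun f : Fin m → Fin m => ∀ x, f (f x) = x),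
    (-1 : ℝ) ^ ((Finset.univ.filter (fun x : Fin m => f x ≠ x)).card / 2) *
      (∏ x ∈ Finset.univ.filter (fun x : Fin m => x < f x), S (a x) (a (f x))) *
      ∏ x ∈ Finset.univ.filter (fun x : Fin m => f x = x), X (a x) ω

/-!
For `Y` and `L` in the Gaussian space, the derivative of `E[exp L] = exp (E[L²] / 2)` in the
direction `Y` is `E[Y exp L] = E[Y L] E[exp L]`. Differentiating this further in the directions
`X_j` inserts factors `X_j` and yields integration by parts, `E[Y P(X)] = E[(D_Y P)(X)]` with
`D_Y = ∑ j, E[Y X_j] ∂/∂X_j`, tilted by `exp L`; finally take `L = 0`.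

Splitting the matchings of `T ∪ {i}` according to the partner of `i` gives
`He_{T ∪ i} = X_i He_T - ∑_{x ∈ T} S[i,x] He_{T \ x}`, while
`D_i He_T = ∑_{x ∈ T} S[i,x] He_{T \ x}`. Hence integrating `X_i` by parts in `E[He_{T ∪ i} He_U]`
leaves only the derivative of `He_U`, that is the pairings of `i` with elements of `U`; iterating
over `T` produces the matchings between the two multisets.
-/

section Matchings

variable {α I R : Type*}

/-- The involutions of `α` fixing every point outside `T`: they encode the partial matchings of
`T`, with the unmatched points of `T` as fixed points. -/
def involutionsOn [Fintype α] [DecidableEq α] (T : Finset α) : Finset (α → α) :=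
  {f | (∀ x, f (f x) = x) ∧ ∀ x ∉ T, f x = x}

section Involutions

variable [Fintype α] [DecidableEq α] {T : Finset α} {i x : α} {f : α → α}

theorem mem_involutionsOn : f ∈ involutionsOn T ↔ f.Involutive ∧ ∀ x ∉ T, f x = x := by
  simp [involutionsOn, Function.Involutive]

theorem involutionsOn_empty : involutionsOn (∅ : Finset α) = {id} := by
  ext f
  simp only [mem_involutionsOn, Finset.notMem_empty, not_false_eq_true, true_imp_iff,
    Finset.mem_singleton, funext_iff, id]
  exact ⟨And.right, fun hf => ⟨fun x => by simp [hf], hf⟩⟩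

theorem filter_involutionsOn_apply_eq_self (T : Finset α) (y : α) :
    {f ∈ involutionsOn T | f y = y} = involutionsOn (T.erase y) := by
  ext f
  simp only [Finset.mem_filter, mem_involutionsOn, Finset.mem_erase, not_and]
  grind

theorem apply_mem_of_mem_involutionsOn (hf : f ∈ involutionsOn T) (hx : x ∈ T) : f x ∈ T := by
  obtain ⟨hinv, hfix⟩ := mem_involutionsOn.1 hf
  by_contra h
  exact h (hfix _ h ▸ (hinv x).symm ▸ hx)

theorem swap_comp_mem_involutionsOn_erase (hf : f ∈ involutionsOn (insert i T))
    (hfi : f i = x) : Equiv.swap i x ∘ f ∈ involutionsOn (T.erase x) := by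
  rw [mem_involutionsOn] at hf ⊢
  obtain ⟨hinv, hfix⟩ := hf
  have hfx : f x = i := hfi ▸ hinv i
  refine ⟨fun z => ?_, fun z hz => ?_⟩
  · have := hinv z
    grind
  · have := hfix z
    grind

theorem swap_comp_mem_involutionsOn_insert (hi : i ∉ T) (hx : x ∈ T)
    (hf : f ∈ involutionsOn (T.erase x)) : Equiv.swap i x ∘ f ∈ involutionsOn (insert i T) := by
  rw [mem_involutionsOn] at hf ⊢
  obtain ⟨hinv, hfix⟩ := hf
  have hfi : f i = i := hfix i (by simp [hi])
  refine ⟨fun z => ?_, fun z hz => ?_⟩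
  · have := hinv z
    grind
  · have := hfix z
    grind

theorem sum_involutionsOn_insert {M : Type*} [AddCommMonoid M] (hi : i ∉ T) (g : (α → α) → M) :
    ∑ f ∈ involutionsOn (insert i T), g f =
      ∑ f ∈ involutionsOn T, g f +
        ∑ x ∈ T, ∑ f ∈ involutionsOn (T.erase x), g (Equiv.swap i x ∘ f) := by
  have hmaps : ∀ f ∈ involutionsOn (insert i T), f i ∈ insert i T := fun f hf =>
    apply_mem_of_mem_involutionsOn hf (Finset.mem_insert_self i T)
  have hswap (x : α) (f : α → α) : Equiv.swap i x ∘ Equiv.swap i x ∘ f = f := by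
    ext z
    simp
  rw [← Finset.sum_fiberwise_of_maps_to hmaps, Finset.sum_insert hi,
    filter_involutionsOn_apply_eq_self, Finset.erase_insert hi]
  congr 1
  refine Finset.sum_congr rfl fun x hx => ?_
  refine Finset.sum_bij' (fun f _ => Equiv.swap i x ∘ f) (fun f _ => Equiv.swap i x ∘ f)
    (fun f hf => ?_) (fun f hf => ?_) (fun f _ => hswap x f) (fun f _ => hswap x f)
    (fun f _ => by rw [hswap])
  · rw [Finset.mem_filter] at hf
    exact swap_comp_mem_involutionsOn_erase hf.1 hf.2
  · have hfi : f i = i := (mem_involutionsOn.1 hf).2 i (by simp [hi])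
    exact Finset.mem_filter.2 ⟨swap_comp_mem_involutionsOn_insert hi hx hf, by simp [hfi]⟩

end Involutions

section Weight

open scoped Finset

variable [Fintype α] [LinearOrder α] [CommRing R] {f : α → α}

theorem card_apply_ne_self_of_involutive (hf : f.Involutive) :
    #{x | f x ≠ x} = 2 * #{x | x < f x} := by
  have hgt : #{x | f x < x} = #{x | x < f x} :=
    Finset.card_nbij' f f (by simp [Set.MapsTo, hf _]) (by simp [Set.MapsTo, hf _])
      (fun x _ => hf x) (fun x _ => hf x)
  have hdisj : Disjoint ({x | f x < x} : Finset α) ({x | x < f x} : Finset α) :=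
    Finset.disjoint_filter.2 fun x _ h => h.not_gt
  simp only [ne_iff_lt_or_gt, Finset.filter_or]
  rw [Finset.card_union_of_disjoint hdisj, hgt, two_mul]

/-- The weight `∏_{uv ∈ M} (-S[u,v])` of the matching `M` encoded by the involution `f`; the factor
of a pair is attached to its smaller element. -/
def matchingWeight (S : I → I → R) (a : α → I) (f : α → α) : R :=
  ∏ x with x < f x, -S (a x) (a (f x))

theorem matchingWeight_id (S : I → I → R) (a : α → I) : matchingWeight S a id = 1 := by
  simp [matchingWeight]

theorem matchingWeight_eq_of_involutive (S : I → I → R) (a : α → I) (hf : f.Involutive) :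
    matchingWeight S a f =
      (-1) ^ (#{x | f x ≠ x} / 2) * ∏ x with x < f x, S (a x) (a (f x)) := by
  rw [matchingWeight, Finset.prod_neg, card_apply_ne_self_of_involutive hf,
    Nat.mul_div_cancel_left _ two_pos]

theorem matchingWeight_swap_comp {S : I → I → R} (hS : ∀ i j, S i j = S j i) (a : α → I)
    (hf : f.Involutive) {i x : α} (hix : i ≠ x) (hi : f i = i) (hx : f x = x) :
    matchingWeight S a (Equiv.swap i x ∘ f) = -S (a i) (a x) * matchingWeight S a f := by
  wlog hlt : i < x generalizing i x
  · rw [Equiv.swap_comm, hS, this hix.symm hx hi (lt_of_le_of_ne (not_lt.1 hlt) hix.symm)]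
  have hne (z : α) (hz : f z ≠ z) : Equiv.swap i x (f z) = f z :=
    Equiv.swap_apply_of_ne_of_ne (hf.injective.ne (by grind) |>.trans_eq hi)
      (hf.injective.ne (by grind) |>.trans_eq hx)
  have hfilter : ({z | z < (Equiv.swap i x ∘ f) z} : Finset α) =
      insert i ({z | z < f z} : Finset α) := by
    ext z
    by_cases hz : f z = z
    · simp only [Finset.mem_filter, Finset.mem_univ, true_and, Finset.mem_insert]
      grind
    · simp [hne z hz, show z ≠ i from fun h => hz (h ▸ hi)]
  rw [matchingWeight, hfilter, Finset.prod_insert (by simp [hi])]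
  congr 1
  · simp [hi]
  · exact Finset.prod_congr rfl fun z hz => by
      rw [Function.comp_apply, hne z (Finset.mem_filter.1 hz).2.ne']

end Weight

end Matchings

section DirectionalDerivative

theorem derivation_prod {ι R A M : Type*} [DecidableEq ι] [CommSemiring R] [CommSemiring A]
    [Algebra R A] [AddCommMonoid M] [Module A M] [Module R M] (D : Derivation R A M)
    (T : Finset ι) (f : ι → A) :
    D (∏ x ∈ T, f x) = ∑ y ∈ T, (∏ x ∈ T.erase y, f x) • D (f y) := by
  induction T using Finset.induction_on with
  | empty => simp
  | insert i T hi ih =>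
    rw [Finset.prod_insert hi, Derivation.leibniz, ih, Finset.sum_insert hi,
      Finset.erase_insert hi, add_comm, Finset.smul_sum]
    congr 1
    refine Finset.sum_congr rfl fun y hy => ?_
    rw [Finset.erase_insert_of_ne (ne_of_mem_of_not_mem hy hi).symm,
      Finset.prod_insert (by simp [hi]), mul_smul]

variable {I R : Type*} [CommSemiring R]

/-- The derivative `∑ j, d j ∂/∂X_j` along the constant vector field `d`. -/
noncomputable def directionalDerivative (d : I → R) :
    Derivation R (MvPolynomial I R) (MvPolynomial I R) :=
  MvPolynomial.mkDerivation R fun j => MvPolynomial.C (d j)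

theorem directionalDerivative_X (d : I → R) (j : I) :
    directionalDerivative d (MvPolynomial.X j) = MvPolynomial.C (d j) :=
  MvPolynomial.mkDerivation_X R _ j

theorem aeval_directionalDerivative_mul_X {A : Type*} [CommSemiring A] [Algebra R A] (x : I → A)
    (d : I → R) (P : MvPolynomial I R) (j : I) :
    MvPolynomial.aeval x (directionalDerivative d (P * MvPolynomial.X j)) =
      MvPolynomial.aeval x (directionalDerivative d P) * x j + d j • MvPolynomial.aeval x P := by
  rw [Derivation.leibniz, directionalDerivative_X]
  simp [mul_comm, add_comm, Algebra.smul_def]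

end DirectionalDerivative

section WickPolynomial

open MvPolynomial

variable {α I R : Type*} [Fintype α] [LinearOrder α] [CommRing R]

/-- The Wick polynomial `He_T` of the multiset of variables listed by `a` on `T`. -/
noncomputable def wickPolynomial (S : I → I → R) (a : α → I) (T : Finset α) : MvPolynomial I R :=
  ∑ f ∈ involutionsOn T, C (matchingWeight S a f) * ∏ x ∈ T with f x = x, X (a x)

theorem wickPolynomial_empty (S : I → I → R) (a : α → I) : wickPolynomial S a ∅ = 1 := by
  simp [wickPolynomial, involutionsOn_empty, matchingWeight_id]

theorem wickPolynomial_insert {S : I → I → R} (hS : ∀ i j, S i j = S j i) (a : α → I)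
    {T : Finset α} {i : α} (hi : i ∉ T) :
    wickPolynomial S a (insert i T) =
      X (a i) * wickPolynomial S a T -
        ∑ x ∈ T, C (S (a i) (a x)) * wickPolynomial S a (T.erase x) := by
  simp only [wickPolynomial, sum_involutionsOn_insert hi, Finset.mul_sum, sub_eq_add_neg,
    ← Finset.sum_neg_distrib]
  congr 1
  · refine Finset.sum_congr rfl fun f hf => ?_
    have hfi : f i = i := (mem_involutionsOn.1 hf).2 i hi
    rw [Finset.filter_insert, if_pos hfi, Finset.prod_insert (by simp [hi]), mul_left_comm]
  · refine Finset.sum_congr rfl fun x hx => Finset.sum_congr rfl fun f hf => ?_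
    have hix : i ≠ x := (ne_of_mem_of_not_mem hx hi).symm
    obtain ⟨hinv, hfix⟩ := mem_involutionsOn.1 hf
    have hfi : f i = i := hfix i (by simp [hi])
    have hfx : f x = x := hfix x (by simp)
    have hunmatched : {z ∈ insert i T | (Equiv.swap i x ∘ f) z = z} =
        {z ∈ T.erase x | f z = z} := by
      ext z
      have := hinv z
      simp only [Finset.mem_filter, Finset.mem_insert, Finset.mem_erase]
      grind
    rw [matchingWeight_swap_comp hS a hinv hix hfi hfx, hunmatched, map_mul, map_neg]
    ring

theorem directionalDerivative_wickPolynomial (S : I → I → R) (d : I → R) (a : α → I)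
    (T : Finset α) :
    directionalDerivative d (wickPolynomial S a T) =
      ∑ y ∈ T, C (d (a y)) * wickPolynomial S a (T.erase y) := by
  have hterm (f : α → α) :
      directionalDerivative d (C (matchingWeight S a f) * ∏ x ∈ T with f x = x, X (a x)) =
        ∑ y ∈ T with f y = y, C (d (a y)) *
          (C (matchingWeight S a f) * ∏ x ∈ T.erase y with f x = x, X (a x)) := by
    rw [← smul_eq_C_mul, Derivation.map_smul, derivation_prod, smul_eq_C_mul, Finset.mul_sum]
    refine Finset.sum_congr rfl fun y _ => ?_
    rw [directionalDerivative_X, Finset.filter_erase, smul_eq_mul]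
    ring
  simp only [wickPolynomial, map_sum, hterm, Finset.mul_sum, ← filter_involutionsOn_apply_eq_self]
  exact Finset.sum_comm' fun f y => by simp only [Finset.mem_filter]; tauto

end WickPolynomial

section GaussianFunctional

open MvPolynomial

/-- A linear functional on polynomials satisfying the Gaussian integration by parts formula with
covariance `S`, i.e. the algebraic counterpart of `P ↦ E[P(X)]` for a centered Gaussian family `X`
with covariance `S`. -/
structure IsGaussianFunctional {I R : Type*} [CommSemiring R] (S : I → I → R)
    (E : MvPolynomial I R →ₗ[R] R) : Prop where
  map_one : E 1 = 1
  map_X_mul (i : I) (P : MvPolynomial I R) : E (X i * P) = E (directionalDerivative (S i) P)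

theorem bijOn_univ_iff {α β : Type*} {f : α → β} {U : Set β} :
    Set.BijOn f Set.univ U ↔ f.Injective ∧ Set.range f = U := by
  rw [← Set.injOn_univ, ← Set.image_univ]
  exact ⟨fun h => ⟨h.injOn, h.image_eq⟩, fun h => h.2 ▸ h.1.bijOn_image⟩

theorem bijOn_cons_iff {β : Type*} {k : ℕ} {y : β} {f : Fin k → β} {U : Set β} :
    Set.BijOn (Fin.cons y f : Fin (k + 1) → β) Set.univ U ↔
      y ∈ U ∧ Set.BijOn f Set.univ (U \ {y}) := by
  simp only [bijOn_univ_iff, Fin.range_cons, Fin.cons_injective_iff]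
  grind

open scoped Classical in
theorem sum_bijOn_fin_succ {β M : Type*} [Fintype β] [AddCommMonoid M] {k : ℕ}
    (U : Finset β) (g : (Fin (k + 1) → β) → M) :
    ∑ f : Fin (k + 1) → β with Set.BijOn f Set.univ U, g f =
      ∑ y ∈ U, ∑ f : Fin k → β with Set.BijOn f Set.univ (U \ {y}), g (Fin.cons y f) := by
  simp_rw [Finset.sum_filter]
  rw [← (Fin.consEquiv fun _ => β).sum_comp, Fintype.sum_prod_type,
    ← Finset.sum_subset (Finset.subset_univ U)]
  · refine Finset.sum_congr rfl fun y hy => Finset.sum_congr rfl fun f _ => ?_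
    simp [Fin.consEquiv, bijOn_cons_iff, hy]
  · intro y _ hy
    simp [Fin.consEquiv, bijOn_cons_iff, hy]

variable {α β I R : Type*} [Fintype α] [LinearOrder α] [Fintype β] [LinearOrder β] [CommRing R]
  {S : I → I → R} {E : MvPolynomial I R →ₗ[R] R}

namespace IsGaussianFunctional

-- The derivative of the first factor cancels the correction terms of `wickPolynomial_insert`.
theorem map_wickPolynomial_insert_mul (hE : IsGaussianFunctional S E)
    (hS : ∀ i j, S i j = S j i) (a : α → I) (b : β → I) {T : Finset α} {i : α} (hi : i ∉ T)
    (U : Finset β) :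
    E (wickPolynomial S a (insert i T) * wickPolynomial S b U) =
      ∑ y ∈ U, S (a i) (b y) * E (wickPolynomial S a T * wickPolynomial S b (U.erase y)) := by
  rw [wickPolynomial_insert hS a hi, sub_mul, mul_assoc, map_sub, hE.map_X_mul,
    Derivation.leibniz, directionalDerivative_wickPolynomial,
    directionalDerivative_wickPolynomial, smul_eq_mul, smul_eq_mul,
    mul_comm (wickPolynomial S b U), map_add, add_sub_cancel_right, Finset.mul_sum, map_sum]
  refine Finset.sum_congr rfl fun y _ => ?_
  rw [mul_left_comm, ← smul_eq_C_mul, map_smul, smul_eq_mul]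

theorem map_wickPolynomial (hE : IsGaussianFunctional S E) (hS : ∀ i j, S i j = S j i)
    (b : β → I) (U : Finset β) : E (wickPolynomial S b U) = if U = ∅ then 1 else 0 := by
  rcases U.eq_empty_or_nonempty with rfl | ⟨j, hj⟩
  · simp [wickPolynomial_empty, hE.map_one]
  · have h := hE.map_wickPolynomial_insert_mul hS b b (Finset.notMem_erase j U) ∅
    rw [Finset.insert_erase hj] at h
    simpa [wickPolynomial_empty, Finset.ne_empty_of_mem hj] using h

open scoped Classical in
theorem map_wickPolynomial_image_mul (hE : IsGaussianFunctional S E) (hS : ∀ i j, S i j = S j i)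
    (a : α → I) (b : β → I) {k : ℕ} {c : Fin k → α} (hc : c.Injective) (U : Finset β) :
    E (wickPolynomial S a (Finset.univ.image c) * wickPolynomial S b U) =
      ∑ f : Fin k → β with Set.BijOn f Set.univ U, ∏ x, S (a (c x)) (b (f x)) := by
  induction k generalizing U with
  | zero =>
    have hU (f : Fin 0 → β) : Set.BijOn f Set.univ U ↔ U = ∅ := by
      rw [bijOn_univ_iff, Set.range_eq_empty, eq_comm, Finset.coe_eq_empty]
      exact and_iff_right (Function.injective_of_subsingleton f)
    simp only [Finset.univ_eq_empty, Finset.image_empty, wickPolynomial_empty, one_mul,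
      hE.map_wickPolynomial hS, hU, Finset.prod_empty, Finset.filter_const]
    split_ifs <;> simp
  | succ k ih =>
    have hc0 : c 0 ∉ Finset.univ.image (Fin.tail c) := by
      simp [Fin.tail, hc.eq_iff]
    have himage : Finset.univ.image c = insert (c 0) (Finset.univ.image (Fin.tail c)) := by
      ext z
      simp [Fin.exists_fin_succ, Fin.tail, eq_comm]
    have htail : (Fin.tail c).Injective := hc.comp (Fin.succ_injective k)
    rw [himage, hE.map_wickPolynomial_insert_mul hS a b hc0, sum_bijOn_fin_succ]
    refine Finset.sum_congr rfl fun y _ => ?_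
    rw [ih htail, Finset.mul_sum, Finset.coe_erase]
    refine Finset.sum_congr rfl fun f _ => ?_
    simp [Fin.prod_univ_succ, Fin.tail]

theorem map_wickPolynomial_univ_mul (hE : IsGaussianFunctional S E) (hS : ∀ i j, S i j = S j i)
    {p : ℕ} (a : Fin p → I) (b : β → I) :
    E (wickPolynomial S a Finset.univ * wickPolynomial S b Finset.univ) =
      ∑ g : Fin p ≃ β, ∏ x, S (a x) (b (g x)) := by
  classical
  have h := hE.map_wickPolynomial_image_mul hS a b Function.injective_id Finset.univ
  simp only [Finset.image_id, Finset.coe_univ, Set.bijOn_univ, id] at h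
  rw [h, Finset.sum_subtype (p := Function.Bijective) _ (by simp),
    ← (Equiv.bijectiveEquiv (α := Fin p) (β := β)).symm.sum_comp]
  rfl

end IsGaussianFunctional

end GaussianFunctional

section MomentAlgebra

open scoped NNReal

variable {Ω : Type*} [MeasurableSpace Ω] {μ : Measure Ω}

/-- The algebra `L^{∞-}(μ)` of real functions having finite moments of all orders. -/
def momentAlgebra (μ : Measure Ω) [IsFiniteMeasure μ] : Subalgebra ℝ (Ω → ℝ) where
  carrier := {f | ∀ p : ℝ≥0, MemLp f p μ}
  mul_mem' {f g} hf hg p := by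
    have : ENNReal.HolderTriple (2 * p : ℝ≥0) (2 * p : ℝ≥0) p := by
      constructor
      push_cast
      rw [ENNReal.mul_inv (by simp) (by simp), ← add_mul, ENNReal.inv_two_add_inv_two, one_mul]
    exact (hg (2 * p)).mul (hf (2 * p))
  add_mem' hf hg p := (hf p).add (hg p)
  algebraMap_mem' r _ := memLp_const r

variable [IsFiniteMeasure μ]

theorem integrable_of_mem_momentAlgebra {f : Ω → ℝ} (hf : f ∈ momentAlgebra μ) :
    Integrable f μ :=
  memLp_one_iff_integrable.1 (by exact_mod_cast hf 1)

theorem aeval_mem_momentAlgebra {I : Type*} {X : I → Ω → ℝ} (hX : ∀ i, X i ∈ momentAlgebra μ)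
    (P : MvPolynomial I ℝ) : MvPolynomial.aeval X P ∈ momentAlgebra μ := by
  have h := Subalgebra.mvPolynomial_aeval_coe (momentAlgebra μ) (fun i => ⟨X i, hX i⟩) P
  exact h ▸ SetLike.coe_mem _

theorem hasDerivAt_integral_mul_exp {f L W : Ω → ℝ} (hf : f ∈ momentAlgebra μ)
    (hW : W ∈ momentAlgebra μ)
    (hexp : ∀ t : ℝ, (fun ω => Real.exp (L ω + t * W ω)) ∈ momentAlgebra μ) (t : ℝ) :
    HasDerivAt (fun t => ∫ ω, f ω * Real.exp (L ω + t * W ω) ∂μ)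
      (∫ ω, (f * W) ω * Real.exp (L ω + t * W ω) ∂μ) t := by
  have hF (u : ℝ) := integrable_of_mem_momentAlgebra (mul_mem hf (hexp u))
  have hF' := integrable_of_mem_momentAlgebra (mul_mem (mul_mem hf hW) (hexp t))
  have hbound := (integrable_of_mem_momentAlgebra
    (mul_mem (mul_mem hf hW) (add_mem (hexp (t + 1)) (hexp (t - 1))))).norm
  refine (hasDerivAt_integral_of_dominated_loc_of_deriv_le (Metric.ball_mem_nhds t one_pos)
    (.of_forall fun u => (hF u).aestronglyMeasurable) (hF t) hF'.aestronglyMeasurable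
    (F' := fun u ω => (f * W) ω * Real.exp (L ω + u * W ω))
    (.of_forall fun ω u hu => ?_) hbound (.of_forall fun ω u _ => ?_)).2
  · rw [Real.ball_eq_Ioo] at hu
    have hle : Real.exp (L ω + u * W ω) ≤
        Real.exp (L ω + (t + 1) * W ω) + Real.exp (L ω + (t - 1) * W ω) := by
      rcases le_total 0 (W ω) with h | h
      · refine le_add_of_le_of_nonneg (Real.exp_le_exp.2 ?_) (Real.exp_nonneg _)
        gcongr
        exact hu.2.le
      · refine le_add_of_nonneg_of_le (Real.exp_nonneg _) (Real.exp_le_exp.2 ?_)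
        gcongr L ω + ?_
        exact mul_le_mul_of_nonpos_right hu.1.le h
    simp only [Pi.mul_apply, Pi.add_apply, norm_mul (f ω * W ω)]
    gcongr
    rwa [Real.norm_of_nonneg (Real.exp_nonneg _), Real.norm_of_nonneg (by positivity)]
  · have hlin : HasDerivAt (fun u => L ω + u * W ω) (W ω) u := (hasDerivAt_mul_const _).const_add _
    rw [Pi.mul_apply, mul_assoc, mul_comm (W ω)]
    exact hlin.exp.const_mul (f ω)

end MomentAlgebra

section GaussianSpace

open MvPolynomial (aeval aeval_C aeval_X)

variable {Ω : Type*} [MeasurableSpace Ω] {μ : Measure Ω}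

theorem integral_smul_mul_exp (c : ℝ) (f L : Ω → ℝ) :
    ∫ ω, (c • f) ω * Real.exp (L ω) ∂μ = c * ∫ ω, f ω * Real.exp (L ω) ∂μ := by
  simp only [Pi.smul_apply, smul_eq_mul, mul_assoc, integral_const_mul]

/-- A linear space of centered Gaussian variables. -/
structure IsCenteredGaussianSpace (V : Submodule ℝ (Ω → ℝ)) (μ : Measure Ω) : Prop where
  hasGaussianLaw {Y : Ω → ℝ} (hY : Y ∈ V) : HasGaussianLaw Y μ
  integral_eq_zero {Y : Ω → ℝ} (hY : Y ∈ V) : ∫ ω, Y ω ∂μ = 0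

namespace IsCenteredGaussianSpace

variable {V : Submodule ℝ (Ω → ℝ)} {L W Y : Ω → ℝ}

theorem isProbabilityMeasure (hV : IsCenteredGaussianSpace V μ) : IsProbabilityMeasure μ :=
  (hV.hasGaussianLaw V.zero_mem).isProbabilityMeasure

theorem mgf_eq (hV : IsCenteredGaussianSpace V μ) (hY : Y ∈ V) (t : ℝ) :
    mgf Y μ t = Real.exp ((∫ ω, Y ω ^ 2 ∂μ) * t ^ 2 / 2) := by
  have h := hV.hasGaussianLaw hY
  rw [mgf_gaussianReal h.map_eq_gaussianReal, hV.integral_eq_zero hY,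
    Real.coe_toNNReal _ (variance_nonneg Y μ),
    variance_of_integral_eq_zero h.aemeasurable (hV.integral_eq_zero hY), zero_mul, zero_add]

theorem integral_exp (hV : IsCenteredGaussianSpace V μ) (hY : Y ∈ V) :
    ∫ ω, Real.exp (Y ω) ∂μ = Real.exp ((∫ ω, Y ω ^ 2 ∂μ) / 2) := by
  simpa [mgf] using hV.mgf_eq hY 1

variable [IsFiniteMeasure μ]

theorem mem_momentAlgebra (hV : IsCenteredGaussianSpace V μ) (hY : Y ∈ V) :
    Y ∈ momentAlgebra μ :=
  fun _ => (hV.hasGaussianLaw hY).memLp ENNReal.coe_ne_top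

theorem exp_mem_momentAlgebra (hV : IsCenteredGaussianSpace V μ) (hY : Y ∈ V) :
    (fun ω => Real.exp (Y ω)) ∈ momentAlgebra μ := by
  intro p
  have := hV.isProbabilityMeasure
  have hmeas : AEStronglyMeasurable (fun ω => Real.exp (Y ω)) μ :=
    (hV.hasGaussianLaw hY).aemeasurable.exp.aestronglyMeasurable
  rcases eq_or_ne p 0 with rfl | hp
  · simpa using hmeas
  have hint : Integrable (fun ω => Real.exp (p * Y ω)) μ :=
    mgf_pos_iff.1 (hV.mgf_eq hY p ▸ Real.exp_pos _)
  refine (integrable_norm_rpow_iff hmeas (by simpa using hp) ENNReal.coe_ne_top).1 ?_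
  simpa [Real.abs_exp, ← Real.exp_mul, mul_comm] using hint

theorem hasDerivAt_integral_mul_exp_zero (hV : IsCenteredGaussianSpace V μ) (hL : L ∈ V)
    (hW : W ∈ V) {f : Ω → ℝ} (hf : f ∈ momentAlgebra μ) :
    HasDerivAt (fun t => ∫ ω, f ω * Real.exp (L ω + t * W ω) ∂μ)
      (∫ ω, (f * W) ω * Real.exp (L ω) ∂μ) 0 := by
  simpa using hasDerivAt_integral_mul_exp hf (hV.mem_momentAlgebra hW)
    (fun t => hV.exp_mem_momentAlgebra (V.add_mem hL (V.smul_mem t hW))) 0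

theorem integrable_mul (hV : IsCenteredGaussianSpace V μ) (hL : L ∈ V) (hW : W ∈ V) :
    Integrable (fun ω => L ω * W ω) μ :=
  integrable_of_mem_momentAlgebra (mul_mem (hV.mem_momentAlgebra hL) (hV.mem_momentAlgebra hW))

theorem integral_add_smul_sq (hV : IsCenteredGaussianSpace V μ) (hL : L ∈ V) (hW : W ∈ V)
    (t : ℝ) :
    ∫ ω, (L ω + t * W ω) ^ 2 ∂μ =
      ∫ ω, L ω ^ 2 ∂μ + 2 * t * ∫ ω, W ω * L ω ∂μ + t ^ 2 * ∫ ω, W ω ^ 2 ∂μ := by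
  have hLL := hV.integrable_mul hL hL
  have hLW := (hV.integrable_mul hW hL).const_mul (2 * t)
  have hWW := (hV.integrable_mul hW hW).const_mul (t ^ 2)
  simp only [← integral_const_mul]
  simp only [pow_two (L _), pow_two (W _)]
  rw [← integral_add hLL hLW, ← integral_add (by exact hLL.add hLW) hWW]
  congr with ω
  ring

theorem integral_mul_exp (hV : IsCenteredGaussianSpace V μ) (hL : L ∈ V) (hW : W ∈ V) :
    ∫ ω, W ω * Real.exp (L ω) ∂μ = (∫ ω, W ω * L ω ∂μ) * ∫ ω, Real.exp (L ω) ∂μ := by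
  have hexp (t : ℝ) : ∫ ω, Real.exp (L ω + t * W ω) ∂μ =
      Real.exp ((∫ ω, L ω ^ 2 ∂μ + 2 * t * ∫ ω, W ω * L ω ∂μ + t ^ 2 * ∫ ω, W ω ^ 2 ∂μ) / 2) :=
    hV.integral_add_smul_sq hL hW t ▸ hV.integral_exp (V.add_mem hL (V.smul_mem t hW))
  have hleft := hV.hasDerivAt_integral_mul_exp_zero hL hW (one_mem _)
  simp only [Pi.one_apply, one_mul, hexp] at hleft
  have hquad (a b c : ℝ) : HasDerivAt (fun t : ℝ => (a + 2 * t * b + t ^ 2 * c) / 2) b 0 := by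
    have h := (((((hasDerivAt_id' (0 : ℝ)).const_mul 2).mul_const b).const_add a).add
      ((hasDerivAt_pow 2 0).mul_const c)).div_const 2
    simpa using h
  have hright := (hquad (∫ ω, L ω ^ 2 ∂μ) (∫ ω, W ω * L ω ∂μ) (∫ ω, W ω ^ 2 ∂μ)).exp
  rw [hleft.unique hright, hV.integral_exp hL, mul_comm]
  simp

theorem integral_add_mul_exp (hV : IsCenteredGaussianSpace V μ) (hL : L ∈ V) {f g : Ω → ℝ}
    (hf : f ∈ momentAlgebra μ) (hg : g ∈ momentAlgebra μ) :
    ∫ ω, (f + g) ω * Real.exp (L ω) ∂μ =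
      ∫ ω, f ω * Real.exp (L ω) ∂μ + ∫ ω, g ω * Real.exp (L ω) ∂μ := by
  have hexp := hV.exp_mem_momentAlgebra hL
  simp only [Pi.add_apply, add_mul]
  exact integral_add (integrable_of_mem_momentAlgebra (mul_mem hf hexp))
    (integrable_of_mem_momentAlgebra (mul_mem hg hexp))

theorem integral_mul_add_smul (hV : IsCenteredGaussianSpace V μ) (hY : Y ∈ V) (hL : L ∈ V)
    (hW : W ∈ V) (t : ℝ) :
    ∫ ω, Y ω * (L ω + t * W ω) ∂μ = ∫ ω, Y ω * L ω ∂μ + t * ∫ ω, Y ω * W ω ∂μ := by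
  rw [← integral_const_mul, ← integral_add (hV.integrable_mul hY hL)
    ((hV.integrable_mul hY hW).const_mul t)]
  congr with ω
  ring

theorem integral_mul_aeval_mul_exp (hV : IsCenteredGaussianSpace V μ) {I : Type*}
    {X : I → Ω → ℝ} (hX : ∀ j, X j ∈ V) (hY : Y ∈ V) (hL : L ∈ V) (P : MvPolynomial I ℝ) :
    ∫ ω, (Y * aeval X P) ω * Real.exp (L ω) ∂μ =
      ∫ ω, aeval X (directionalDerivative (fun j => ∫ ω, Y ω * X j ω ∂μ) P) ω * Real.exp (L ω) ∂μ +
        (∫ ω, Y ω * L ω ∂μ) * ∫ ω, aeval X P ω * Real.exp (L ω) ∂μ := by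
  have hYmem := hV.mem_momentAlgebra hY
  have hmem := aeval_mem_momentAlgebra fun j => hV.mem_momentAlgebra (hX j)
  induction P using MvPolynomial.induction_on generalizing L with
  | C c =>
    have hC : aeval X (.C c) = c • (1 : Ω → ℝ) := by
      rw [aeval_C, Algebra.algebraMap_eq_smul_one]
    rw [MvPolynomial.derivation_C, map_zero, hC, mul_smul_comm, mul_one, integral_smul_mul_exp,
      integral_smul_mul_exp, hV.integral_mul_exp hL hY]
    simp only [Pi.zero_apply, Pi.one_apply, zero_mul, one_mul, integral_zero, zero_add]
    ring
  | add P Q hP hQ =>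
    simp only [map_add, mul_add]
    rw [hV.integral_add_mul_exp hL (mul_mem hYmem (hmem P)) (mul_mem hYmem (hmem Q)),
      hV.integral_add_mul_exp hL (hmem _) (hmem _), hV.integral_add_mul_exp hL (hmem P) (hmem Q),
      hP hL, hQ hL]
    ring
  | mul_X P j hP =>
    set D := directionalDerivative fun j => ∫ ω, Y ω * X j ω ∂μ
    have hderiv {f : Ω → ℝ} := hV.hasDerivAt_integral_mul_exp_zero (f := f) hL (hX j)
    have hleft := hderiv (mul_mem hYmem (hmem P))
    have htilt (t : ℝ) := hP (V.add_mem hL (V.smul_mem t (hX j)))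
    simp only [Pi.add_apply, Pi.smul_apply, smul_eq_mul,
      hV.integral_mul_add_smul hY hL (hX j)] at htilt
    have hright := (hderiv (hmem (D P))).add
      (((hasDerivAt_mul_const (∫ ω, Y ω * X j ω ∂μ)).const_add (∫ ω, Y ω * L ω ∂μ)).mul
        (hderiv (hmem P)))
    simp only [htilt] at hleft
    have h := hleft.unique hright
    rw [map_mul, aeval_X, ← mul_assoc, h, aeval_directionalDerivative_mul_X,
      hV.integral_add_mul_exp hL (mul_mem (hmem _) (hV.mem_momentAlgebra (hX j)))
        (Subalgebra.smul_mem _ (hmem P) _), integral_smul_mul_exp]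
    simp only [zero_mul, add_zero]
    ring

end IsCenteredGaussianSpace

theorem isCenteredGaussianSpace_span {I : Type*} {X : I → Ω → ℝ} (hmeas : ∀ i, Measurable (X i))
    (hgauss : ∀ (m : ℕ) (idx : Fin m → I) (c : Fin m → ℝ), ∃ v : NNReal,
      Measure.map (fun ω => ∑ x, c x * X (idx x) ω) μ = gaussianReal 0 v) :
    IsCenteredGaussianSpace (Submodule.span ℝ (Set.range X)) μ := by
  have hlaw {Y : Ω → ℝ} (hY : Y ∈ Submodule.span ℝ (Set.range X)) :
      ∃ v : NNReal, HasLaw Y (gaussianReal 0 v) μ := by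
    obtain ⟨m, c, g, rfl⟩ := Submodule.mem_span_set'.1 hY
    choose idx hidx using fun x => (g x).2
    obtain ⟨v, hv⟩ := hgauss m idx c
    have hsum : ∑ x, c x • (g x : Ω → ℝ) = fun ω => ∑ x, c x * X (idx x) ω := by
      ext ω
      simp [hidx]
    refine ⟨v, ?_, hsum ▸ hv⟩
    rw [hsum]
    fun_prop
  refine ⟨fun hY => ?_, fun hY => ?_⟩ <;> obtain ⟨v, hv⟩ := hlaw hY
  · exact hv.hasGaussianLaw
  · rw [hv.integral_eq, integral_id_gaussianReal]

/-- The functional `P ↦ E[P(X)]` on polynomials in variables with finite moments. -/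
noncomputable def polynomialExpectation [IsFiniteMeasure μ] {I : Type*} (X : I → Ω → ℝ)
    (hX : ∀ i, X i ∈ momentAlgebra μ) : MvPolynomial I ℝ →ₗ[ℝ] ℝ where
  toFun P := ∫ ω, aeval X P ω ∂μ
  map_add' P Q := by
    rw [map_add]
    exact integral_add (integrable_of_mem_momentAlgebra (aeval_mem_momentAlgebra hX P))
      (integrable_of_mem_momentAlgebra (aeval_mem_momentAlgebra hX Q))
  map_smul' c P := by
    rw [map_smul]
    exact integral_const_mul c _

theorem IsCenteredGaussianSpace.isGaussianFunctional_polynomialExpectation [IsFiniteMeasure μ]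
    {V : Submodule ℝ (Ω → ℝ)} (hV : IsCenteredGaussianSpace V μ) {I : Type*} {X : I → Ω → ℝ}
    (hX : ∀ i, X i ∈ V) :
    IsGaussianFunctional (fun i j => ∫ ω, X i ω * X j ω ∂μ)
      (polynomialExpectation X fun i => hV.mem_momentAlgebra (hX i)) where
  map_one := by
    have := hV.isProbabilityMeasure
    simp [polynomialExpectation]
  map_X_mul i P := by
    simpa [polynomialExpectation] using
      hV.integral_mul_aeval_mul_exp hX (hX i) V.zero_mem P

end GaussianSpace

theorem aeval_wickPolynomial_univ {Ω I : Type*} (X : I → Ω → ℝ) (S : I → I → ℝ) {m : ℕ}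
    (a : Fin m → I) :
    MvPolynomial.aeval X (wickPolynomial S a Finset.univ) = wickProduct X S a := by
  ext ω
  have hset : involutionsOn (Finset.univ : Finset (Fin m)) =
      ({f | ∀ x, f (f x) = x} : Finset (Fin m → Fin m)) := by
    ext f
    simp [involutionsOn]
  rw [wickProduct, ← hset, wickPolynomial, map_sum, Finset.sum_apply]
  refine Finset.sum_congr rfl fun f hf => ?_
  have hweight := matchingWeight_eq_of_involutive S a (mem_involutionsOn.1 hf).1
  simp [hweight]

/-- **Orthogonality of Wick products.**  Let `X = (X_i)_{i ∈ I}` be a mean-zero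
jointly Gaussian family with covariance `S`.  Then Wick products of different
total degrees are orthogonal, and in general
`E[He_α(X;S) He_β(X;S)] = Σ_{M ∈ M_perf(α,β)} ∏_{uv ∈ M} S[u,v]`, where the sum
is over perfect matchings pairing elements of `α` (listed by `a : Fin p → I`)
only with elements of `β` (listed by `b : Fin s → I`), i.e. over bijections
`g : Fin p ≃ Fin s`. -/
theorem wickProduct_orthogonality {Ω I : Type*} [MeasurableSpace Ω]
    (μ : Measure Ω) [IsProbabilityMeasure μ]
    (X : I → Ω → ℝ) (S : I → I → ℝ)
    (hmeas : ∀ i, Measurable (X i))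
    (hS : ∀ i j, S i j = S j i)
    (hgauss : ∀ (m : ℕ) (idx : Fin m → I) (c : Fin m → ℝ), ∃ v : NNReal,
      Measure.map (fun ω => ∑ x, c x * X (idx x) ω) μ = gaussianReal 0 v)
    (hcov : ∀ i j, ∫ ω, X i ω * X j ω ∂μ = S i j)
    {p s : ℕ} (a : Fin p → I) (b : Fin s → I) :
    (p ≠ s → ∫ ω, wickProduct X S a ω * wickProduct X S b ω ∂μ = 0) ∧
    (∫ ω, wickProduct X S a ω * wickProduct X S b ω ∂μ =
      ∑ g : Fin p ≃ Fin s, ∏ x, S (a x) (b (g x))) := by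
  have hV := isCenteredGaussianSpace_span hmeas hgauss
  have hE := hV.isGaussianFunctional_polynomialExpectation fun i =>
    Submodule.subset_span (Set.mem_range_self i)
  simp only [hcov] at hE
  have hformula := hE.map_wickPolynomial_univ_mul hS a b
  simp only [polynomialExpectation, LinearMap.coe_mk, AddHom.coe_mk, map_mul,
    aeval_wickPolynomial_univ, Pi.mul_apply] at hformula
  refine ⟨fun hps => ?_, hformula⟩
  have : IsEmpty (Fin p ≃ Fin s) := ⟨fun g => hps (Fin.equiv_iff_eq.1 ⟨g⟩)⟩
  rw [hformula, Fintype.sum_empty]
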